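/- arXiv:2507.02077 — 2 statements merged into one kernel-verified Lean document; each statement's English description precedes it below -/
import Mathlib

section
/- The function R satisfies the equation a ΔR − ∇a · ∇R = 0 on U; that is, a(∂₁₁R + ∂₂₂R) − (∂₁a)(∂₁R) − (∂₂a)(∂₂R) = 0 at every point of U. -/
/-- Partial derivative in direction `i` of a function on `ℝ²`. -/
noncomputable def pd (i : Fin 2) (f : EuclideanSpace ℝ (Fin 2) → ℝ)
    (x : EuclideanSpace ℝ (Fin 2)) : ℝ :=
  fderiv ℝ f x (EuclideanSpace.single i 1)


theorem pd_smooth {U : Set (EuclideanSpace ℝ (Fin 2))} (hU : IsOpen U) {f : EuclideanSpace ℝ (Fin 2) → ℝ}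
    (hf : ContDiffOn ℝ (⊤ : ℕ∞) f U) (i : Fin 2) : ContDiffOn ℝ (⊤ : ℕ∞) (pd i f) U := by
  have h := hf.fderiv_of_isOpen (m := ((⊤ : ℕ∞) : WithTop ℕ∞)) hU (by simp)
  exact h.clm_apply contDiffOn_const

theorem diffAt {U : Set (EuclideanSpace ℝ (Fin 2))} (hU : IsOpen U) {f : EuclideanSpace ℝ (Fin 2) → ℝ}
    (hf : ContDiffOn ℝ (⊤ : ℕ∞) f U) {x : EuclideanSpace ℝ (Fin 2)} (hx : x ∈ U) : DifferentiableAt ℝ f x :=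
  (hf.differentiableOn (by simp)).differentiableAt (hU.mem_nhds hx)

theorem pd_congr {U : Set (EuclideanSpace ℝ (Fin 2))} (hU : IsOpen U) {f g : EuclideanSpace ℝ (Fin 2) → ℝ} (h : ∀ x ∈ U, f x = g x)
    (i : Fin 2) {x : EuclideanSpace ℝ (Fin 2)} (hx : x ∈ U) : pd i f x = pd i g x := by
  have : f =ᶠ[nhds x] g := Filter.eventually_of_mem (hU.mem_nhds hx) h
  simp only [pd, this.fderiv_eq]

theorem pd_mul {f g : EuclideanSpace ℝ (Fin 2) → ℝ} {x : EuclideanSpace ℝ (Fin 2)} (hf : DifferentiableAt ℝ f x)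
    (hg : DifferentiableAt ℝ g x) (i : Fin 2) :
    pd i (fun y => f y * g y) x = pd i f x * g x + f x * pd i g x := by
  simp only [pd, fderiv_fun_mul hf hg]
  simp
  ring

theorem pd_add {f g : EuclideanSpace ℝ (Fin 2) → ℝ} {x : EuclideanSpace ℝ (Fin 2)} (hf : DifferentiableAt ℝ f x)
    (hg : DifferentiableAt ℝ g x) (i : Fin 2) :
    pd i (fun y => f y + g y) x = pd i f x + pd i g x := by
  simp only [pd, fderiv_fun_add hf hg]
  simp

theorem pd_neg (f : EuclideanSpace ℝ (Fin 2) → ℝ) (x : EuclideanSpace ℝ (Fin 2)) (i : Fin 2) :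
    pd i (fun y => - f y) x = - pd i f x := by
  simp only [pd, fderiv_fun_neg]
  simp

theorem coord_smooth (U : Set (EuclideanSpace ℝ (Fin 2))) (j : Fin 2) :
    ContDiffOn ℝ (⊤ : ℕ∞) (fun y : EuclideanSpace ℝ (Fin 2) => y j) U :=
  (EuclideanSpace.proj (𝕜 := ℝ) j).contDiff.contDiffOn

theorem pd_coord (i j : Fin 2) (x : EuclideanSpace ℝ (Fin 2)) :
    pd i (fun y : EuclideanSpace ℝ (Fin 2) => y j) x = if j = i then 1 else 0 := by
  have : fderiv ℝ (fun y : EuclideanSpace ℝ (Fin 2) => y j) x = EuclideanSpace.proj (𝕜 := ℝ) j :=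
    (EuclideanSpace.proj (𝕜 := ℝ) j).hasFDerivAt.fderiv
  simp [pd, this]

theorem pd_comm {U : Set (EuclideanSpace ℝ (Fin 2))} (hU : IsOpen U) {f : EuclideanSpace ℝ (Fin 2) → ℝ}
    (hf : ContDiffOn ℝ (⊤ : ℕ∞) f U) {x : EuclideanSpace ℝ (Fin 2)} (hx : x ∈ U) (i j : Fin 2) :
    pd i (pd j f) x = pd j (pd i f) x := by
  have h1 : DifferentiableAt ℝ (fderiv ℝ f) x :=
    ((hf.fderiv_of_isOpen (m := ((⊤ : ℕ∞) : WithTop ℕ∞)) hU (by simp)).differentiableOn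
      (by simp)).differentiableAt (hU.mem_nhds hx)
  have key : ∀ i j : Fin 2, pd i (pd j f) x =
      fderiv ℝ (fderiv ℝ f) x (EuclideanSpace.single i 1) (EuclideanSpace.single j 1) := by
    intro i j
    have : HasFDerivAt (pd j f) _ x := h1.hasFDerivAt.clm_apply
      (hasFDerivAt_const (EuclideanSpace.single j (1 : ℝ)) x)
    rw [pd, this.fderiv]
    simp
  have hs : IsSymmSndFDerivAt ℝ f x :=
    (hf.contDiffAt (hU.mem_nhds hx)).isSymmSndFDerivAt (by simp only [minSmoothness_of_isRCLikeNormedField]; exact WithTop.coe_le_coe.2 (le_top : (2 : ℕ∞) ≤ ⊤))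
  rw [key, key]
  exact hs _ _

/-- Lemma 3.1 (second part): the radial quantity `R = a(x₁ u₁ + x₂ u₂)` satisfies
`a ΔR − ∇a · ∇R = 0` on `U`. -/
theorem stmt3 (U : Set (EuclideanSpace ℝ (Fin 2))) (hU : IsOpen U)
    (a u : EuclideanSpace ℝ (Fin 2) → ℝ)
    (ha : ContDiffOn ℝ (⊤ : ℕ∞) a U) (hapos : ∀ x ∈ U, 0 < a x)
    (hrad : ∀ x ∈ U, -(x 1) * pd 0 a x + x 0 * pd 1 a x = 0)
    (hu : ContDiffOn ℝ (⊤ : ℕ∞) u U)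
    (heq : ∀ x ∈ U, a x * (pd 0 (pd 0 u) x + pd 1 (pd 1 u) x)
      + (pd 0 a x * pd 0 u x + pd 1 a x * pd 1 u x) = 0)
    (R : EuclideanSpace ℝ (Fin 2) → ℝ)
    (hR : ∀ x, R x = a x * (x 0 * pd 0 u x + x 1 * pd 1 u x)) :
    ∀ x ∈ U, a x * (pd 0 (pd 0 R) x + pd 1 (pd 1 R) x)
      - (pd 0 a x * pd 0 R x + pd 1 a x * pd 1 R x) = 0 := by
  have su0 := pd_smooth hU hu 0
  have su1 := pd_smooth hU hu 1
  have c0 := coord_smooth U 0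
  have c1 := coord_smooth U 1
  obtain ⟨T, hT⟩ : ∃ T : EuclideanSpace ℝ (Fin 2) → ℝ, T = fun y => -(y 1 * pd 0 u y) + y 0 * pd 1 u y := ⟨_, rfl⟩
  have sT : ContDiffOn ℝ (⊤ : ℕ∞) T U := by
    rw [hT]
    exact (c1.mul su0).neg.add (c0.mul su1)
  have dT : ∀ i, ∀ y ∈ U, pd i T y = -(pd i (fun y : EuclideanSpace ℝ (Fin 2) => y 1) y * pd 0 u y + y 1 * pd i (pd 0 u) y)
      + (pd i (fun y : EuclideanSpace ℝ (Fin 2) => y 0) y * pd 1 u y + y 0 * pd i (pd 1 u) y) := by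
    intro i y hy
    rw [hT, pd_add (diffAt hU (c1.mul su0).neg hy) (diffAt hU (c0.mul su1) hy), pd_neg,
      pd_mul (diffAt hU c1 hy) (diffAt hU su0 hy), pd_mul (diffAt hU c0 hy) (diffAt hU su1 hy)]
  have dR : ∀ i, ∀ y ∈ U, pd i R y = pd i a y * (y 0 * pd 0 u y + y 1 * pd 1 u y) +
      a y * ((pd i (fun y : EuclideanSpace ℝ (Fin 2) => y 0) y * pd 0 u y + y 0 * pd i (pd 0 u) y)
      + (pd i (fun y : EuclideanSpace ℝ (Fin 2) => y 1) y * pd 1 u y + y 1 * pd i (pd 1 u) y)) := by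
    intro i y hy
    rw [funext hR, pd_mul (diffAt hU ha hy) (diffAt hU ((c0.mul su0).add (c1.mul su1)) hy),
      pd_add (diffAt hU (c0.mul su0) hy) (diffAt hU (c1.mul su1) hy),
      pd_mul (diffAt hU c0 hy) (diffAt hU su0 hy), pd_mul (diffAt hU c1 hy) (diffAt hU su1 hy)]
  have R0 : ∀ y ∈ U, pd 0 R y = -(a y * pd 1 T y) := by
    intro y hy
    rw [dR 0 y hy, dT 1 y hy, pd_comm hU hu hy 1 0]
    simp only [pd_coord]
    simp
    linear_combination y 0 * heq y hy - pd 1 u y * hrad y hy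
  have R1 : ∀ y ∈ U, pd 1 R y = a y * pd 0 T y := by
    intro y hy
    rw [dR 1 y hy, dT 0 y hy, pd_comm hU hu hy 1 0]
    simp only [pd_coord]
    simp
    linear_combination y 1 * heq y hy + pd 0 u y * hrad y hy
  intro x hx
  have sT0 := pd_smooth hU sT 0
  have sT1 := pd_smooth hU sT 1
  rw [pd_congr hU R0 0 hx, pd_congr hU R1 1 hx, pd_neg,
    pd_mul (diffAt hU ha hx) (diffAt hU sT1 hx), pd_mul (diffAt hU ha hx) (diffAt hU sT0 hx),
    R0 x hx, R1 x hx, pd_comm hU sT hx 1 0]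
  ring
end

section
/- At every point of U, (∂₁a)(∂₁R) + (∂₂a)(∂₂R) = a ( (∂₂a)(∂₁T) − (∂₁a)(∂₂T) ). -/
theorem pd_add_aux (i : Fin 2) (f g : EuclideanSpace ℝ (Fin 2) → ℝ)
    (x : EuclideanSpace ℝ (Fin 2)) (hf : DifferentiableAt ℝ f x) (hg : DifferentiableAt ℝ g x) :
    pd i (fun y => f y + g y) x = pd i f x + pd i g x := by
  unfold pd
  rw [fderiv_fun_add hf hg]; rfl

theorem pd_mul_aux (i : Fin 2) (f g : EuclideanSpace ℝ (Fin 2) → ℝ)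
    (x : EuclideanSpace ℝ (Fin 2)) (hf : DifferentiableAt ℝ f x) (hg : DifferentiableAt ℝ g x) :
    pd i (fun y => f y * g y) x = f x * pd i g x + g x * pd i f x := by
  unfold pd
  rw [fderiv_fun_mul hf hg]; simp

theorem pd_neg_aux (i : Fin 2) (f : EuclideanSpace ℝ (Fin 2) → ℝ)
    (x : EuclideanSpace ℝ (Fin 2)) :
    pd i (fun y => -f y) x = - pd i f x := by
  unfold pd
  rw [fderiv_fun_neg]; simp

theorem diff_coord_aux (j : Fin 2) (x : EuclideanSpace ℝ (Fin 2)) :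
    DifferentiableAt ℝ (fun y : EuclideanSpace ℝ (Fin 2) => y j) x :=
  (EuclideanSpace.proj (𝕜 := ℝ) j).differentiableAt

theorem pd_coord_aux (i j : Fin 2) (x : EuclideanSpace ℝ (Fin 2)) :
    pd i (fun y => y j) x = if j = i then 1 else 0 := by
  unfold pd
  have h : fderiv ℝ (fun y : EuclideanSpace ℝ (Fin 2) => y j) x
      = EuclideanSpace.proj (𝕜 := ℝ) j :=
    (EuclideanSpace.proj (𝕜 := ℝ) j).hasFDerivAt.fderiv
  rw [h]
  simp [Pi.single_apply]

theorem pd_pd_aux (i j : Fin 2) (u : EuclideanSpace ℝ (Fin 2) → ℝ)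
    (x : EuclideanSpace ℝ (Fin 2)) (h : DifferentiableAt ℝ (fderiv ℝ u) x) :
    pd i (pd j u) x = fderiv ℝ (fderiv ℝ u) x (EuclideanSpace.single i 1)
      (EuclideanSpace.single j 1) := by
  unfold pd
  rw [fderiv_clm_apply h (differentiableAt_const _)]
  simp

/-- Lemma 3.2, first identity: `a₁ R₁ + a₂ R₂ = a (a₂ T₁ − a₁ T₂)` on `U`. -/
theorem stmt4 (U : Set (EuclideanSpace ℝ (Fin 2))) (hU : IsOpen U)
    (a u : EuclideanSpace ℝ (Fin 2) → ℝ)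
    (ha : ContDiffOn ℝ (⊤ : ℕ∞) a U) (hapos : ∀ x ∈ U, 0 < a x)
    (hrad : ∀ x ∈ U, -(x 1) * pd 0 a x + x 0 * pd 1 a x = 0)
    (hu : ContDiffOn ℝ (⊤ : ℕ∞) u U)
    (heq : ∀ x ∈ U, a x * (pd 0 (pd 0 u) x + pd 1 (pd 1 u) x)
      + (pd 0 a x * pd 0 u x + pd 1 a x * pd 1 u x) = 0)
    (T R : EuclideanSpace ℝ (Fin 2) → ℝ)
    (hT : ∀ x, T x = -(x 1) * pd 0 u x + x 0 * pd 1 u x)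
    (hR : ∀ x, R x = a x * (x 0 * pd 0 u x + x 1 * pd 1 u x)) :
    ∀ x ∈ U, pd 0 a x * pd 0 R x + pd 1 a x * pd 1 R x
      = a x * (pd 1 a x * pd 0 T x - pd 0 a x * pd 1 T x) := by
  have h2top : (2 : WithTop ℕ∞) ≤ ((⊤ : ℕ∞) : WithTop ℕ∞) := by
    exact WithTop.coe_le_coe.2 (le_top : (2 : ℕ∞) ≤ ⊤)
  intro x hx
  have hax : DifferentiableAt ℝ a x :=
    (ha.contDiffAt (hU.mem_nhds hx)).differentiableAt (by simp)
  have hux : ContDiffAt ℝ (⊤ : ℕ∞) u x := hu.contDiffAt (hU.mem_nhds hx)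
  have hdu : DifferentiableAt ℝ (fderiv ℝ u) x :=
    (hux.fderiv_right (m := 1) (by rw [one_add_one_eq_two]; exact h2top)).differentiableAt (by simp)
  have hd : ∀ j, DifferentiableAt ℝ (pd j u) x := fun j =>
    hdu.clm_apply (differentiableAt_const _)
  have hsymm : pd 1 (pd 0 u) x = pd 0 (pd 1 u) x := by
    rw [pd_pd_aux _ _ _ _ hdu, pd_pd_aux _ _ _ _ hdu]
    exact (hux.isSymmSndFDerivAt (by simpa using h2top)).eq _ _
  have hc := fun j => diff_coord_aux j x
  have hTd : ∀ i, pd i T x = (-(x 1) * pd i (pd 0 u) x + pd 0 u x * (-(if 1 = i then 1 else 0)))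
      + (x 0 * pd i (pd 1 u) x + pd 1 u x * (if 0 = i then 1 else 0)) := by
    intro i
    rw [show T = _ from funext hT,
      pd_add_aux i _ _ x ((hc 1).fun_neg.fun_mul (hd 0)) ((hc 0).fun_mul (hd 1)),
      pd_mul_aux i _ _ x (hc 1).fun_neg (hd 0), pd_mul_aux i _ _ x (hc 0) (hd 1),
      pd_neg_aux, pd_coord_aux, pd_coord_aux]
  have hRd : ∀ i, pd i R x = a x * ((x 0 * pd i (pd 0 u) x + pd 0 u x * (if 0 = i then 1 else 0))
      + (x 1 * pd i (pd 1 u) x + pd 1 u x * (if 1 = i then 1 else 0)))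
      + (x 0 * pd 0 u x + x 1 * pd 1 u x) * pd i a x := by
    intro i
    rw [show R = _ from funext hR,
      pd_mul_aux i _ _ x hax (((hc 0).fun_mul (hd 0)).fun_add ((hc 1).fun_mul (hd 1))),
      pd_add_aux i _ _ x ((hc 0).fun_mul (hd 0)) ((hc 1).fun_mul (hd 1)),
      pd_mul_aux i _ _ x (hc 0) (hd 0), pd_mul_aux i _ _ x (hc 1) (hd 1),
      pd_coord_aux, pd_coord_aux]
  have h1 := heq x hx
  have h2 := hrad x hx
  rw [hTd, hTd, hRd, hRd, hsymm]
  simp only [if_true, one_ne_zero, zero_ne_one, if_false]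
  linear_combination (pd 0 a x * x 0 + pd 1 a x * x 1) * h1
    + (pd 1 a x * pd 0 u x - pd 0 a x * pd 1 u x) * h2
end
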